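/- Let f, g : ℝ^d → ℝ be bounded measurable functions, let x ∈ ℝ^d and ℓ > 0. Then |τ̄_ℓ(f,g)(x)| ≤ 2 · δf(ℓ;x) · δg(ℓ;x). -/

import Mathlib

/-!
The cumulant is invariant under adding constants to `f` and `g`, because the rescaled kernel `G_ℓ`
has integral one (`integral_resc`). Subtracting the constants `f x` and `g x` therefore expresses
it through increments (`tau2_eq_incr`):
`τ̄_ℓ(f,g)(x) = ∫ G_ℓ δf δg - (∫ G_ℓ δf) (∫ G_ℓ δg)`.
Since `G_ℓ` is a probability density vanishing outside the ball of radius `ℓ`, an average against it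
is bounded by any bound valid on that ball (`abs_cg_le`). So each of the two terms is at most
`δf(ℓ;x) δg(ℓ;x)` in absolute value, which accounts for the constant `2`.
-/

open MeasureTheory Metric
open scoped RealInnerProductSpace ENNReal

noncomputable section

abbrev Euc (d : ℕ) := EuclideanSpace ℝ (Fin d)

namespace QT

variable {d : ℕ}

/-- `G` is a mollifier: smooth, nonnegative, supported in the open unit ball, integral one. -/
structure IsMollifier {d : ℕ} (G : Euc d → ℝ) : Prop where
  smooth : ContDiff ℝ (⊤ : ℕ∞) G
  nonneg : ∀ r, 0 ≤ G r
  supp : tsupport G ⊆ ball (0 : Euc d) 1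
  integral_one : ∫ r, G r = 1

/-- The rescaled mollifier `G_ℓ(r) = ℓ^{-d} G(r/ℓ)`. -/
def resc (G : Euc d → ℝ) (ℓ : ℝ) (r : Euc d) : ℝ := (ℓ ^ d)⁻¹ * G (ℓ⁻¹ • r)

/-- Coarse-grained field `ā_ℓ(x) = ∫ G_ℓ(r) a(x+r) dr`. -/
def cg {E : Type*} [NormedAddCommGroup E] [NormedSpace ℝ E]
    (G : Euc d → ℝ) (ℓ : ℝ) (a : Euc d → E) (x : Euc d) : E :=
  ∫ r, resc G ℓ r • a (x + r)

/-- Increment `δa(r;x) = a(x+r) - a(x)`. -/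
def incr {E : Type*} [NormedAddCommGroup E] (a : Euc d → E) (r x : Euc d) : E :=
  a (x + r) - a x

/-- `δa(ℓ;x) = sup_{|r|<ℓ} |δa(r;x)|`. -/
def supIncr {E : Type*} [NormedAddCommGroup E] (a : Euc d → E) (ℓ : ℝ) (x : Euc d) : ℝ :=
  ⨆ r ∈ ball (0 : Euc d) ℓ, ‖incr a r x‖

/-- Second-order coarse-graining cumulant `τ̄_ℓ(f,g)`. -/
def tau2 (G : Euc d → ℝ) (ℓ : ℝ) (f g : Euc d → ℝ) (x : Euc d) : ℝ :=
  cg G ℓ (fun y => f y * g y) x - cg G ℓ f x * cg G ℓ g x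

/-- `τ̄_ℓ(ρ, v)` for a scalar density and a vector field. -/
def tauV (G : Euc d → ℝ) (ℓ : ℝ) (ρ : Euc d → ℝ) (v : Euc d → Euc d) (x : Euc d) : Euc d :=
  cg G ℓ (fun y => ρ y • v y) x - cg G ℓ ρ x • cg G ℓ v x

/-- `i`-th standard basis vector. -/
def e (d : ℕ) (i : Fin d) : Euc d := EuclideanSpace.single i (1 : ℝ)

/-- Partial derivative `∂_i f(x)`. -/
def pd (i : Fin d) (f : Euc d → ℝ) (x : Euc d) : ℝ := fderiv ℝ f x (e d i)

/-- Laplacian. -/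
def lap (f : Euc d → ℝ) (x : Euc d) : ℝ := ∑ i, pd i (fun y => pd i f y) x

/-- Gradient matrix `(∇v)_{ij} = ∂_i v_j`. -/
def gradMat (v : Euc d → Euc d) (x : Euc d) : Matrix (Fin d) (Fin d) ℝ :=
  Matrix.of fun i j => pd i (fun y => v y j) x

/-- Frobenius norm of a matrix. -/
def frobNorm (A : Matrix (Fin d) (Fin d) ℝ) : ℝ := Real.sqrt (∑ i, ∑ j, A i j ^ 2)

/-- Frobenius inner product `A : B`. -/
def frobInner (A B : Matrix (Fin d) (Fin d) ℝ) : ℝ := ∑ i, ∑ j, A i j * B i j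

/-- Favre-averaged velocity `ṽ_ℓ = \overline{(ρv)}_ℓ/ρ̄_ℓ` where `ρ̄_ℓ > 0`, `0` otherwise. -/
def favre (G : Euc d → ℝ) (ℓ : ℝ) (ρ : Euc d → ℝ) (v : Euc d → Euc d) (x : Euc d) : Euc d :=
  if 0 < cg G ℓ ρ x then (cg G ℓ ρ x)⁻¹ • cg G ℓ (fun y => ρ y • v y) x else 0

/-- Favre stress `τ̃_ℓ(v,v) = \overline{(ρ v⊗v)}_ℓ/ρ̄_ℓ − ṽ_ℓ ⊗ ṽ_ℓ`. -/
def favreStress (G : Euc d → ℝ) (ℓ : ℝ) (ρ : Euc d → ℝ) (v : Euc d → Euc d) (x : Euc d) :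
    Matrix (Fin d) (Fin d) ℝ :=
  Matrix.of fun i j =>
    (cg G ℓ ρ x)⁻¹ * cg G ℓ (fun y => ρ y * (v y i * v y j)) x
      - favre G ℓ ρ v x i * favre G ℓ ρ v x j

/-- Deformation work `Π_ℓ = −ρ̄_ℓ ∇ṽ_ℓ : τ̃_ℓ(v,v)`. -/
def deformWork (G : Euc d → ℝ) (ℓ : ℝ) (ρ : Euc d → ℝ) (v : Euc d → Euc d) (x : Euc d) : ℝ :=
  -(cg G ℓ ρ x * frobInner (gradMat (favre G ℓ ρ v) x) (favreStress G ℓ ρ v x))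

/-- The periodic box `[0,𝓛]^d`. -/
def box (d : ℕ) (L : ℝ) : Set (Euc d) := {x | ∀ i, x i ∈ Set.Icc (0 : ℝ) L}

/-- Normalized measure on the periodic box, so that `eLpNorm · p (boxMeasure d 𝓛)`
is the normalized `L^p` norm `(𝓛^{-d}∫_{[0,𝓛]^d}|f|^p)^{1/p}` (ess-sup for `p = ∞`). -/
def boxMeasure (d : ℕ) (L : ℝ) : Measure (Euc d) :=
  (ENNReal.ofReal (L ^ d))⁻¹ • (volume.restrict (box d L))

/-- `𝓛`-periodicity in each coordinate. -/
def PeriodicF {E : Type*} (L : ℝ) (f : Euc d → E) : Prop :=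
  ∀ (x : Euc d) (i : Fin d), f (x + EuclideanSpace.single i L) = f x

/-- Quantum stress `Σ = (ħ²/4m²)(Δρ)I − (ħ²/m²)∇√ρ ⊗ ∇√ρ`. -/
def qStress (hb m : ℝ) (ρ : Euc d → ℝ) (x : Euc d) : Matrix (Fin d) (Fin d) ℝ :=
  Matrix.of fun i j =>
    (hb ^ 2 / (4 * m ^ 2)) * lap ρ x * (if i = j then (1 : ℝ) else 0)
      - (hb ^ 2 / m ^ 2) * (gradient (fun y => Real.sqrt (ρ y)) x i
          * gradient (fun y => Real.sqrt (ρ y)) x j)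

/-- Coarse-grained quantum stress `Σ̄_ℓ`. -/
def cgStress (G : Euc d → ℝ) (ℓ hb m : ℝ) (ρ : Euc d → ℝ) (x : Euc d) :
    Matrix (Fin d) (Fin d) ℝ :=
  Matrix.of fun i j => cg G ℓ (fun z => qStress hb m ρ z i j) x

/-- Row-wise divergence of the coarse-grained quantum stress, `(∇·Σ̄_ℓ)_j = ∑_i ∂_i (Σ̄_ℓ)_{ij}`. -/
def divCgStress (G : Euc d → ℝ) (ℓ hb m : ℝ) (ρ : Euc d → ℝ) (x : Euc d) : Euc d :=
  (EuclideanSpace.equiv (Fin d) ℝ).symm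
    (fun j => ∑ i, pd i (fun y => cgStress G ℓ hb m ρ y i j) x)

/-- Quantum baropycnal work `Λ^{(Σ)}_ℓ = −(1/ρ̄_ℓ)(∇·Σ̄_ℓ)·τ̄_ℓ(ρ,v)`. -/
def qBaroWork (G : Euc d → ℝ) (ℓ hb m : ℝ) (ρ : Euc d → ℝ) (v : Euc d → Euc d) (x : Euc d) : ℝ :=
  -((cg G ℓ ρ x)⁻¹ * ⟪divCgStress G ℓ hb m ρ x, tauV G ℓ ρ v x⟫)

end QT

namespace QT

variable {d : ℕ}

lemma IsMollifier.resc_nonneg {G : Euc d → ℝ} (hG : IsMollifier G) {ℓ : ℝ} (hℓ : 0 < ℓ)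
    (r : Euc d) : 0 ≤ resc G ℓ r :=
  mul_nonneg (by positivity) (hG.nonneg _)

lemma IsMollifier.resc_eq_zero {G : Euc d → ℝ} (hG : IsMollifier G) {ℓ : ℝ} (hℓ : 0 < ℓ)
    {r : Euc d} (hr : r ∉ ball (0 : Euc d) ℓ) : resc G ℓ r = 0 := by
  have h : ℓ⁻¹ • r ∉ tsupport G := fun h => hr <| by
    have h1 := hG.supp h
    rw [mem_ball_zero_iff, norm_smul, Real.norm_of_nonneg (by positivity),
      inv_mul_lt_iff₀ hℓ, mul_one] at h1
    simpa using h1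
  rw [resc, image_eq_zero_of_notMem_tsupport h, mul_zero]

lemma IsMollifier.integrable_resc {G : Euc d → ℝ} (hG : IsMollifier G) {ℓ : ℝ} (hℓ : 0 < ℓ) :
    Integrable (resc G ℓ) := by
  -- A non-integrable function has Bochner integral `0`, whereas `∫ G = 1`.
  have h : Integrable G := by
    by_contra h
    exact one_ne_zero (hG.integral_one.symm.trans (integral_undef h))
  exact (h.comp_smul (inv_ne_zero hℓ.ne')).const_mul _

lemma IsMollifier.integral_resc {G : Euc d → ℝ} (hG : IsMollifier G) {ℓ : ℝ} (hℓ : 0 < ℓ) :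
    ∫ r, resc G ℓ r = 1 := by
  unfold resc
  rw [integral_const_mul, Measure.integral_comp_inv_smul_of_nonneg _ _ hℓ.le, hG.integral_one,
    finrank_euclideanSpace_fin, smul_eq_mul, mul_one, inv_mul_cancel₀ (by positivity)]

lemma IsMollifier.integrable_resc_smul {G : Euc d → ℝ} (hG : IsMollifier G) {ℓ : ℝ} (hℓ : 0 < ℓ)
    {a : Euc d → ℝ} (ha : Measurable a) {C : ℝ} (hC : ∀ y, |a y| ≤ C) (x : Euc d) :
    Integrable fun r => resc G ℓ r • a (x + r) :=
  (hG.integrable_resc hℓ).mul_bdd (c := C) (ha.comp (measurable_const_add x)).aestronglyMeasurable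
    (.of_forall fun _ => hC _)

/-- A local average over the ball of radius `ℓ` inherits any bound valid on that ball. -/
lemma IsMollifier.abs_cg_le {G : Euc d → ℝ} (hG : IsMollifier G) {ℓ : ℝ} (hℓ : 0 < ℓ)
    {a : Euc d → ℝ} {x : Euc d} {M : ℝ} (hM : ∀ r ∈ ball (0 : Euc d) ℓ, |a (x + r)| ≤ M) :
    |cg G ℓ a x| ≤ M := by
  have h : ‖∫ r, resc G ℓ r • a (x + r)‖ ≤ ∫ r, resc G ℓ r * M := by
    refine norm_integral_le_of_norm_le ((hG.integrable_resc hℓ).mul_const M) (.of_forall fun r => ?_)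
    by_cases hr : r ∈ ball (0 : Euc d) ℓ
    · rw [norm_smul, Real.norm_of_nonneg (hG.resc_nonneg hℓ r)]
      exact mul_le_mul_of_nonneg_left (hM r hr) (hG.resc_nonneg hℓ r)
    · simp [hG.resc_eq_zero hℓ hr]
  rwa [integral_mul_const, hG.integral_resc hℓ, one_mul] at h

/-- Boundedness of `a` keeps the supremum from taking its junk value `0`. -/
lemma abs_incr_le_supIncr {a : Euc d → ℝ} {C : ℝ} (hC : ∀ y, |a y| ≤ C) {ℓ : ℝ} (x : Euc d)
    {r : Euc d} (hr : r ∈ ball (0 : Euc d) ℓ) : |incr a r x| ≤ supIncr a ℓ x := by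
  have hb (s : Euc d) : ‖incr a s x‖ ≤ C + C :=
    (norm_sub_le _ _).trans (add_le_add (hC _) (hC _))
  have hbdd : BddAbove (Set.range fun s : Euc d => ⨆ _ : s ∈ ball (0 : Euc d) ℓ, ‖incr a s x‖) := by
    refine ⟨C + C, ?_⟩
    rintro _ ⟨s, rfl⟩
    exact Real.iSup_le (fun _ => hb s) ((norm_nonneg _).trans (hb s))
  have h := le_ciSup hbdd r
  rwa [ciSup_pos hr] at h

lemma supIncr_nonneg (a : Euc d → ℝ) (ℓ : ℝ) (x : Euc d) : 0 ≤ supIncr a ℓ x :=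
  Real.iSup_nonneg fun _ => Real.iSup_nonneg fun _ => norm_nonneg _

/-- Invariance of the cumulant under constant shifts: `f` and `g` may be replaced by their
increments from the base point `x`. -/
lemma IsMollifier.tau2_eq_incr {G : Euc d → ℝ} (hG : IsMollifier G) {ℓ : ℝ} (hℓ : 0 < ℓ)
    {f g : Euc d → ℝ} (hfm : Measurable f) (hgm : Measurable g) {Cf Cg : ℝ}
    (hfb : ∀ y, |f y| ≤ Cf) (hgb : ∀ y, |g y| ≤ Cg) (x : Euc d) :
    tau2 G ℓ f g x = tau2 G ℓ (fun y => f y - f x) (fun y => g y - g x) x := by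
  have hK := hG.integrable_resc hℓ
  have hf := hG.integrable_resc_smul hℓ hfm hfb x
  have hg := hG.integrable_resc_smul hℓ hgm hgb x
  have hfg := hG.integrable_resc_smul hℓ (hfm.mul hgm) (C := Cf * Cg) (fun y => by
    rw [Pi.mul_apply, abs_mul]
    exact mul_le_mul (hfb y) (hgb y) (abs_nonneg _) ((abs_nonneg _).trans (hfb y))) x
  have shift {a : Euc d → ℝ} (ha : Integrable fun r => resc G ℓ r • a (x + r)) :
      cg G ℓ (fun y => a y - a x) x = cg G ℓ a x - a x := by
    simp only [cg, smul_sub]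
    rw [integral_sub ha (hK.smul_const (a x)), integral_smul_const, hG.integral_resc hℓ, one_smul]
  have prod : cg G ℓ (fun y => (f y - f x) * (g y - g x)) x =
      cg G ℓ (fun y => f y * g y) x - g x * cg G ℓ f x - f x * cg G ℓ g x + f x * g x := by
    have e : (fun r => resc G ℓ r • ((f (x + r) - f x) * (g (x + r) - g x))) = fun r =>
        resc G ℓ r • (f * g) (x + r) - g x * (resc G ℓ r • f (x + r))
          - f x * (resc G ℓ r • g (x + r)) + resc G ℓ r * (f x * g x) := by
      funext r
      simp only [smul_eq_mul, Pi.mul_apply]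
      ring
    have i1 : Integrable fun r => resc G ℓ r • (f * g) (x + r) - g x * (resc G ℓ r • f (x + r)) :=
      hfg.sub (hf.const_mul _)
    have i2 : Integrable fun r => resc G ℓ r • (f * g) (x + r) - g x * (resc G ℓ r • f (x + r))
        - f x * (resc G ℓ r • g (x + r)) :=
      i1.sub (hg.const_mul _)
    unfold cg
    rw [e, integral_add i2 (hK.mul_const _), integral_sub i1 (hg.const_mul _),
      integral_sub hfg (hf.const_mul _), integral_const_mul, integral_const_mul,
      integral_mul_const, hG.integral_resc hℓ, one_mul]
    rfl
  rw [tau2, tau2, shift hf, shift hg, prod]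
  ring

end QT

open QT in
/-- `|τ̄_ℓ(f,g)(x)| ≤ 2 δf(ℓ;x) δg(ℓ;x)`. -/
theorem abs_tau2_le {d : ℕ} (hd : 1 ≤ d)
    (G : Euc d → ℝ) (hG : IsMollifier G)
    (f g : Euc d → ℝ) (hfm : Measurable f) (hgm : Measurable g)
    (Cf Cg : ℝ) (hfb : ∀ y, |f y| ≤ Cf) (hgb : ∀ y, |g y| ≤ Cg)
    (x : Euc d) (ℓ : ℝ) (hℓ : 0 < ℓ) :
    |tau2 G ℓ f g x| ≤ 2 * supIncr f ℓ x * supIncr g ℓ x := by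
  rw [hG.tau2_eq_incr hℓ hfm hgm hfb hgb x, tau2]
  have hf : ∀ r ∈ ball (0 : Euc d) ℓ, |f (x + r) - f x| ≤ supIncr f ℓ x :=
    fun r hr => abs_incr_le_supIncr hfb x hr
  have hg : ∀ r ∈ ball (0 : Euc d) ℓ, |g (x + r) - g x| ≤ supIncr g ℓ x :=
    fun r hr => abs_incr_le_supIncr hgb x hr
  have h1 : |cg G ℓ (fun y => (f y - f x) * (g y - g x)) x| ≤ supIncr f ℓ x * supIncr g ℓ x :=
    hG.abs_cg_le hℓ fun r hr => by
      rw [abs_mul]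
      exact mul_le_mul (hf r hr) (hg r hr) (abs_nonneg _) (supIncr_nonneg _ _ _)
  have h2 : |cg G ℓ (fun y => f y - f x) x * cg G ℓ (fun y => g y - g x) x| ≤
      supIncr f ℓ x * supIncr g ℓ x := by
    rw [abs_mul]
    exact mul_le_mul (hG.abs_cg_le hℓ hf) (hG.abs_cg_le hℓ hg) (abs_nonneg _)
      (supIncr_nonneg _ _ _)
  refine (abs_sub _ _).trans ?_
  linarith
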